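/- Let Σ be an alphabet containing at least two distinct symbols. Then the copy language { w ++ w : w a word over Σ } is not context-free. -/

import Mathlib

namespace CopyLang

open ContextFreeGrammar

/-- A list of symbols derives the concatenation of words derived by its symbols. -/
lemma derives_flatten {α : Type} (g : ContextFreeGrammar α) (β : List (Symbol α g.NT))
    (ps : List (List α))
    (h : List.Forall₂ (fun s p => g.Derives [s] (List.map Symbol.terminal p)) β ps) :
    g.Derives β (List.map Symbol.terminal ps.flatten) := by
  induction h with
  | nil => exact Derives.refl _
  | @cons s p β ps h1 _ ih =>
    have e1 := h1.append_right β
    have e2 := ih.append_left (List.map Symbol.terminal p)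
    simpa using e1.trans e2

lemma split_right {A B : Type} (R : A → B → Prop) (l : List A) (b1 b2 : List B)
    (h : List.Forall₂ R l (b1 ++ b2)) :
    ∃ a1 a2, List.Forall₂ R a1 b1 ∧ List.Forall₂ R a2 b2 ∧ l = a1 ++ a2 :=
  ⟨_, _, List.forall₂_take_append _ _ _ h, List.forall₂_drop_append _ _ _ h, by simp⟩

lemma split_left {A B : Type} (R : A → B → Prop) (l : List B) (a1 a2 : List A)
    (h : List.Forall₂ R (a1 ++ a2) l) :
    ∃ b1 b2, List.Forall₂ R a1 b1 ∧ List.Forall₂ R a2 b2 ∧ l = b1 ++ b2 := by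
  obtain ⟨b1, b2, h1, h2, e⟩ := split_right (flip R) l a1 a2 h.flip
  exact ⟨b1, b2, h1.flip, h2.flip, e⟩

lemma length_flatten_le {α : Type} (l : ℕ) (ps : List (List α))
    (h : ∀ p ∈ ps, p.length ≤ l) : ps.flatten.length ≤ ps.length * l := by
  induction ps with
  | nil => simp
  | cons p ps ih =>
    have h1 := h p (by simp)
    have h2 := ih (fun q hq => h q (by simp [hq]))
    simp only [List.flatten_cons, List.length_append, List.length_cons]
    nlinarith

/-- Every derivation of a long word has a subtree of controlled size. -/
lemma key {α : Type} (g : ContextFreeGrammar α) (k l : ℕ) (hk : 1 ≤ k) (hl : 1 ≤ l)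
    (hr : ∀ r ∈ g.rules, r.output.length ≤ k) (w : List α) (β : List (Symbol α g.NT))
    (h : g.Derives β (List.map Symbol.terminal w)) :
    ∃ ps : List (List α),
      List.Forall₂ (fun s p => g.Derives [s] (List.map Symbol.terminal p)) β ps ∧
      ps.flatten = w ∧
      ((∀ p ∈ ps, p.length ≤ k * l) ∨
        ∃ (u x v : List α) (B : Symbol α g.NT), w = u ++ x ++ v ∧
          (∃ r ∈ g.rules, B ∈ r.output) ∧
          g.Derives β (List.map Symbol.terminal u ++ [B] ++ List.map Symbol.terminal v) ∧
          g.Derives [B] (List.map Symbol.terminal x) ∧ l < x.length ∧ x.length ≤ k * l) := by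
  induction h using Relation.ReflTransGen.head_induction_on with
  | refl =>
    refine ⟨w.map (fun c => [c]), ?_, ?_, Or.inl ?_⟩
    · rw [List.forall₂_map_left_iff, List.forall₂_map_right_iff, List.forall₂_same]
      intro c _
      exact Derives.refl _
    · induction w with
      | nil => rfl
      | cons c w ih => simpa using ih
    · intro p hp
      obtain ⟨c, _, rfl⟩ := List.mem_map.1 hp
      exact Nat.mul_pos hk hl
  | @head β γ hbg hg ih =>
    obtain ⟨ps, hps, hw, hor⟩ := ih
    have hbg' := hbg
    obtain ⟨r, hrm, hrw⟩ := hbg'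
    obtain ⟨p, q, rfl, rfl⟩ := hrw.exists_parts
    obtain ⟨ps12, ps3, h12, h3, rfl⟩ :
        ∃ a b, List.Forall₂ (fun s p => g.Derives [s] (List.map Symbol.terminal p))
          (p ++ r.output) a ∧ List.Forall₂ (fun s p => g.Derives [s] (List.map Symbol.terminal p))
          q b ∧ ps = a ++ b :=
      split_left _ _ _ _ hps
    obtain ⟨ps1, ps2, h1, h2, rfl⟩ :
        ∃ a b, List.Forall₂ (fun s p => g.Derives [s] (List.map Symbol.terminal p))
          p a ∧ List.Forall₂ (fun s p => g.Derives [s] (List.map Symbol.terminal p))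
          r.output b ∧ ps12 = a ++ b :=
      split_left _ _ _ _ h12
    have hA : g.Derives [Symbol.nonterminal r.input] (List.map Symbol.terminal ps2.flatten) :=
      Produces.trans_derives ⟨r, hrm, ContextFreeRule.Rewrites.input_output⟩
        (derives_flatten g _ _ h2)
    refine ⟨ps1 ++ [ps2.flatten] ++ ps3, ?_, ?_, ?_⟩
    · exact List.rel_append (List.rel_append h1 (List.Forall₂.cons hA List.Forall₂.nil)) h3
    · simpa using hw
    rcases hor with hor | ⟨u, x, v, B, e1, e2, e3, e4⟩
    swap
    · exact Or.inr ⟨u, x, v, B, e1, e2, hbg.trans_derives e3, e4⟩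
    by_cases hlen : ps2.flatten.length ≤ k * l
    · left
      intro z hz
      simp only [List.mem_append, List.mem_singleton] at hz
      rcases hz with (hz | rfl) | hz
      · exact hor z (by simp [hz])
      · exact hlen
      · exact hor z (by simp [hz])
    right
    obtain ⟨x, hx, hxl⟩ : ∃ x ∈ ps2, l < x.length := by
      by_contra! hcon
      have h5 := length_flatten_le l ps2 hcon
      have h6 := h2.length_eq
      have h7 := hr r hrm
      exact hlen (h5.trans (Nat.mul_le_mul_right _ (h6 ▸ h7)))
    obtain ⟨a1, a2, rfl⟩ := List.append_of_mem hx
    obtain ⟨o1, o2', ho1, ho2, ho⟩ := split_right _ _ _ _ h2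
    obtain ⟨B, o2, hB, hoo, rfl⟩ := List.forall₂_cons_right_iff.1 ho2
    refine ⟨ps1.flatten ++ a1.flatten, x, a2.flatten ++ ps3.flatten, B, ?_, ⟨r, hrm, ?_⟩, ?_, hB,
      hxl, hor x (by simp)⟩
    · rw [← hw]; simp
    · rw [ho]; simp
    · refine hbg.trans_derives ?_
      rw [ho]
      have d1 := (derives_flatten g _ _ (List.rel_append h1 ho1)).append_right ([B] ++ (o2 ++ q))
      have d2 := (derives_flatten g _ _ (List.rel_append hoo h3)).append_left
        (List.map Symbol.terminal (ps1 ++ a1).flatten ++ [B])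
      simp only [List.append_assoc, List.flatten_append, List.cons_append, List.nil_append,
        List.map_append] at d1 d2 ⊢
      exact d1.trans d2

lemma exists_large (C k : ℕ) : ∃ l : ℕ, 1 ≤ l ∧ C * ((2 * (k * l) + 1) * (2 * (k * l) + 1)) < 2 ^ l := by
  have h := tendsto_pow_const_div_const_pow_of_one_lt 2 (show (1 : ℝ) < 2 by norm_num)
  set M : ℝ := C * (2 * k + 1) ^ 2 + 1 with hM
  have hMp : 0 < M := by positivity
  have h2 := (h.eventually (gt_mem_nhds (inv_pos.2 hMp))).and (Filter.eventually_ge_atTop 1)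
  obtain ⟨l, h3, h4⟩ := h2.exists
  refine ⟨l, h4, ?_⟩
  have h5 : (l : ℝ) ^ 2 * M < 2 ^ l := by
    rw [div_lt_iff₀ (by positivity), inv_mul_eq_div, lt_div_iff₀ hMp] at h3
    exact h3
  have h6 : (1 : ℝ) ≤ l := by exact_mod_cast h4
  have h7 : (2 * ((k : ℝ) * l) + 1) ≤ (2 * k + 1) * l := by nlinarith
  have h8 : (2 * ((k : ℝ) * l) + 1) * (2 * ((k : ℝ) * l) + 1) ≤
      ((2 * k + 1) * l) * ((2 * k + 1) * l) := by gcongr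
  have h9 := mul_le_mul_of_nonneg_left h8 (Nat.cast_nonneg (α := ℝ) C)
  have : (C : ℝ) * ((2 * (k * l) + 1) * (2 * (k * l) + 1)) < 2 ^ l := by
    rw [hM] at h5
    nlinarith
  exact_mod_cast this

/-- Two squares agreeing outside a window of at most half the length agree. -/
lemma window_eq {α : Type} (n : ℕ) (u x x' v t t' : List α) (h : u ++ x ++ v = t ++ t)
    (h' : u ++ x' ++ v = t' ++ t') (ht : t.length = n) (hx : x.length = x'.length)
    (hxn : x.length ≤ n) : x = x' := by
  have hl := congrArg List.length h
  have hl' := congrArg List.length h'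
  simp only [List.length_append] at hl hl'
  have ht' : t'.length = n := by omega
  have per : ∀ (y s : List α), u ++ y ++ v = s ++ s → s.length = n → ∀ j < n,
      (u ++ y ++ v)[j]? = (u ++ y ++ v)[j + n]? := by
    intro y s e hs j hj
    rw [e, List.getElem?_append_left (by omega), List.getElem?_append_right (by omega)]
    congr 1; omega
  have p1 := per x t h ht
  have p2 := per x' t' h' ht'
  have out : ∀ j, j < u.length ∨ u.length + x.length ≤ j →
      (u ++ x ++ v)[j]? = (u ++ x' ++ v)[j]? := by
    intro j hj
    simp only [List.getElem?_append, List.length_append, hx]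
    rcases hj with hj | hj
    · rw [if_pos (by omega), if_pos (by omega), if_pos (by omega), if_pos (by omega)]
    · rw [if_neg (by omega), if_neg (by omega)]
  have all : u ++ x ++ v = u ++ x' ++ v := by
    apply List.ext_getElem?
    intro j
    by_cases hj : j < u.length ∨ u.length + x.length ≤ j
    · exact out j hj
    by_cases hjn : j < n
    · rw [p1 j hjn, p2 j hjn]
      exact out _ (by omega)
    · have q1 := p1 (j - n) (by omega)
      have q2 := p2 (j - n) (by omega)
      rw [Nat.sub_add_cancel (by omega)] at q1 q2
      rw [← q1, ← q2]
      exact out _ (by omega)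
  simpa using all

end CopyLang

open CopyLang in
open Classical in
theorem copy_language_not_contextFree {α : Type} (a b : α) (hab : a ≠ b) :
    ¬ Language.IsContextFree {w : List α | ∃ t : List α, w = t ++ t} := by
  rintro ⟨g, hg⟩
  have hmem : ∀ w : List α, g.Derives [Symbol.nonterminal g.initial] (w.map Symbol.terminal) ↔
      ∃ t : List α, w = t ++ t := by
    intro w
    rw [← ContextFreeGrammar.mem_language_iff, hg]
    rfl
  let k := g.rules.sup (fun r => r.output.length) + 1
  have hk : 1 ≤ k := by omega
  have hr : ∀ r ∈ g.rules, r.output.length ≤ k := fun r hr =>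
    (Finset.le_sup (f := fun r : ContextFreeRule α g.NT => r.output.length) hr).trans
      (Nat.le_succ _)
  let F : Finset (Symbol α g.NT) := g.rules.biUnion (fun r => r.output.toFinset)
  obtain ⟨l, hl, hlarge⟩ := exists_large F.card k
  have hl0 : 0 < l := hl
  have hkl : 0 < k * l := Nat.mul_pos hk hl
  let f : (Fin l → Bool) → ℕ → α := fun s j => if s ⟨j % l, Nat.mod_lt _ hl0⟩ then a else b
  let T : (Fin l → Bool) → List α := fun s => (List.range (k * l)).map (f s)
  have hTlen : ∀ s, (T s).length = k * l := fun s => by simp [T]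
  have hTT : ∀ s, T s ++ T s = (List.range (k * l + k * l)).map (f s) := by
    intro s
    rw [List.range_add, List.map_append, List.map_map]
    congr 1
    apply List.map_congr_left
    intro j _
    simp [f]
  have hex : ∀ s, ∃ (u x v : List α) (B : Symbol α g.NT), T s ++ T s = u ++ x ++ v ∧ B ∈ F ∧
      g.Derives [Symbol.nonterminal g.initial]
        (List.map Symbol.terminal u ++ [B] ++ List.map Symbol.terminal v) ∧
      g.Derives [B] (List.map Symbol.terminal x) ∧ l < x.length ∧ x.length ≤ k * l := by
    intro s
    obtain ⟨ps, h1, h2, h3⟩ := key g k l hk hl hr (T s ++ T s) [Symbol.nonterminal g.initial]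
      ((hmem _).2 ⟨_, rfl⟩)
    rcases h3 with h3 | ⟨u, x, v, B, e1, ⟨r, hr1, hr2⟩, e3⟩
    · exfalso
      have hlen := h1.length_eq
      obtain ⟨z, rfl⟩ := List.length_eq_one_iff.1 hlen.symm
      have h4 := h3 z (by simp)
      have h5 := congrArg List.length h2
      simp [hTlen] at h5
      omega
    · exact ⟨u, x, v, B, e1, Finset.mem_biUnion.2 ⟨r, hr1, by simpa using hr2⟩, e3⟩
  choose u x v B h1 h2 h3 h4 h5 h6 using hex
  have hlen : ∀ s, (u s).length + (x s).length + (v s).length = 2 * (k * l) := by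
    intro s
    have := congrArg List.length (h1 s)
    simp only [List.length_append, hTlen] at this
    omega
  let R := Finset.range (2 * (k * l) + 1)
  obtain ⟨s, -, s', -, hne, heq⟩ := Finset.exists_ne_map_eq_of_card_lt_of_maps_to
    (s := (Finset.univ : Finset (Fin l → Bool))) (t := F ×ˢ (R ×ˢ R))
    (f := fun s => (B s, (u s).length, (x s).length))
    (by simpa [R, Finset.card_product] using hlarge)
    (by
      intro s _
      have := hlen s
      simp only [R, Finset.coe_product, Set.mem_prod, Finset.mem_coe, Finset.mem_range]
      exact ⟨h2 s, by omega, by omega⟩)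
  simp only [Prod.mk.injEq] at heq
  obtain ⟨hB, hu, hx⟩ := heq
  have hswap : g.Derives [Symbol.nonterminal g.initial]
      ((u s ++ x s' ++ v s).map Symbol.terminal) := by
    have d := h4 s'
    rw [← hB] at d
    have d2 := (d.append_left (List.map Symbol.terminal (u s))).append_right
      (List.map Symbol.terminal (v s))
    simpa using (h3 s).trans d2
  obtain ⟨t', ht'⟩ := (hmem _).1 hswap
  have hxx : x s = x s' :=
    window_eq (k * l) (u s) (x s) (x s') (v s) (T s) t' (h1 s).symm ht' (hTlen s) hx (h6 s)
  apply hne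
  have val : ∀ s j, j < (x s).length → (x s)[j]? = some (f s ((u s).length + j)) := by
    intro s j hj
    have e : (T s ++ T s)[(u s).length + j]? = (x s)[j]? := by
      rw [h1 s, List.getElem?_append_left (by simp; omega), List.getElem?_append_right (by omega)]
      congr 1; omega
    have := hlen s
    rw [← e, hTT s, List.getElem?_map, List.getElem?_range (by omega)]
    rfl
  funext i
  obtain ⟨j, hj, hji⟩ : ∃ j < l, ((u s).length + j) % l = i.val := by
    have hi := i.2
    have hm := Nat.mod_lt (u s).length hl0
    refine ⟨(i.val + (l - (u s).length % l)) % l, Nat.mod_lt _ hl0, ?_⟩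
    rw [Nat.add_mod_mod, Nat.add_mod, Nat.add_mod_mod,
      show (u s).length % l + (i.val + (l - (u s).length % l)) = i.val + l by omega]
    simp [Nat.mod_eq_of_lt hi]
  have v1 := val s j (by have := h5 s; omega)
  have v2 := val s' j (by have := h5 s'; omega)
  rw [← hxx, v1, ← hu] at v2
  have hf : f s ((u s).length + j) = f s' ((u s).length + j) := by simpa using v2
  simp only [f, hji] at hf
  cases hs : s i <;> cases hs' : s' i <;> simp_all
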